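/- Let s and e be composable labelled transition systems. If s eco e, then s accepts e. -/

import Mathlib

/-- Labels extended with the quiescence label `δ`. -/
inductive ELabel (Lab : Type) : Type
  | lab : Lab → ELabel Lab
  | delta : ELabel Lab

namespace ELabel

/-- Membership of an extended label in `𝓛^δ = 𝓛 ∪ {δ}`. -/
def inL {Lab : Type} (Ls : Set Lab) : ELabel Lab → Prop
  | lab ℓ => ℓ ∈ Ls
  | delta => True

end ELabel

/-- A trace lies in `(𝓛^δ)*`. -/
def TraceIn {Lab : Type} (Ls : Set Lab) (σ : List (ELabel Lab)) : Prop :=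
  ∀ x ∈ σ, ELabel.inL Ls x

/-- A labelled transition system.  `T q none q'` is an internal `τ`-step,
`T q (some ℓ) q'` is a step labelled `ℓ`. -/
structure LTS (Q : Type) (Lab : Type) where
  I : Set Lab
  U : Set Lab
  T : Q → Option Lab → Q → Prop
  q0 : Q

namespace LTS

variable {Q Lab : Type}

/-- The label set `L = I ∪ U`. -/
def L (M : LTS Q Lab) : Set Lab := M.I ∪ M.U

/-- Standing assumptions on all LTSs: countable, disjoint input/output label
sets, transitions labelled within `L`, strong convergence (no infinite
`τ`-sequences), and image-finiteness. -/
def WellFormed (M : LTS Q Lab) : Prop :=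
  M.I.Countable ∧ M.U.Countable ∧ Disjoint M.I M.U ∧
  (∀ q ℓ q', M.T q (some ℓ) q' → ℓ ∈ M.L) ∧
  (¬ ∃ f : ℕ → Q, ∀ n, M.T (f n) none (f (n + 1))) ∧
  (∀ q a, {q' | M.T q a q'}.Finite)

/-- A state is quiescent if neither an output nor `τ` is enabled in it. -/
def Quiescent (M : LTS Q Lab) (q : Q) : Prop :=
  (∀ x ∈ M.U, ∀ q', ¬ M.T q (some x) q') ∧ ∀ q', ¬ M.T q none q'

/-- A single visible step `q --x--> q'` for `x ∈ L^δ`, where the quiescence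
label `δ` gives a self-loop at quiescent states. -/
def VStep (M : LTS Q Lab) (q : Q) : ELabel Lab → Q → Prop
  | .lab ℓ, q' => M.T q (some ℓ) q'
  | .delta, q' => q' = q ∧ M.Quiescent q

/-- Zero or more `τ`-steps: `q ==ε==> q'`. -/
def Eps (M : LTS Q Lab) : Q → Q → Prop :=
  Relation.ReflTransGen fun a b => M.T a none b

/-- Weak transition `q ==σ==> q'` for `σ ∈ (L^δ)*`. -/
inductive W (M : LTS Q Lab) : Q → List (ELabel Lab) → Q → Prop
  | nil {q q' : Q} : M.Eps q q' → W M q [] q'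
  | snoc {q q1 q2 q' : Q} {σ : List (ELabel Lab)} {x : ELabel Lab} :
      W M q σ q1 → M.VStep q1 x q2 → M.Eps q2 q' → W M q (σ ++ [x]) q'

/-- `X after σ`, for a set of states `X`. -/
def afterSet (M : LTS Q Lab) (X : Set Q) (σ : List (ELabel Lab)) : Set Q :=
  {q' | ∃ q ∈ X, M.W q σ q'}

/-- `M after σ`, from the initial state. -/
def after (M : LTS Q Lab) (σ : List (ELabel Lab)) : Set Q :=
  {q' | M.W M.q0 σ q'}

/-- The predicate underlying `out(q) ⊆ U ∪ {δ}`. -/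
def outLabel (M : LTS Q Lab) (q : Q) : ELabel Lab → Prop
  | .lab ℓ => ℓ ∈ M.U ∧ ∃ q', M.T q (some ℓ) q'
  | .delta => M.Quiescent q

/-- `out(q)`. -/
def outq (M : LTS Q Lab) (q : Q) : Set (ELabel Lab) :=
  {x | M.outLabel q x}

/-- `in(q) = {ℓ ∈ I | q ==ℓ==>}`. -/
def inq (M : LTS Q Lab) (q : Q) : Set Lab :=
  {ℓ | ℓ ∈ M.I ∧ ∃ q', M.W q [ELabel.lab ℓ] q'}

/-- `out(X) = ⋃_{q ∈ X} out(q)`. -/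
def outSet (M : LTS Q Lab) (X : Set Q) : Set (ELabel Lab) :=
  ⋃ q ∈ X, M.outq q

/-- `in(X) = ⋂_{q ∈ X} in(q)`. -/
def inSet (M : LTS Q Lab) (X : Set Q) : Set Lab :=
  ⋂ q ∈ X, M.inq q

/-- Input-enabledness: `M` is an IOTS. -/
def InputEnabled (M : LTS Q Lab) : Prop :=
  ∀ q, ∀ ℓ ∈ M.I, ∃ q', M.W q [ELabel.lab ℓ] q'

/-- `Utraces(M)`. -/
def Utraces (M : LTS Q Lab) : Set (List (ELabel Lab)) :=
  {σ | TraceIn M.L σ ∧ (∃ q', M.W M.q0 σ q') ∧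
    ∀ σ1 ℓ σ2, σ = σ1 ++ ELabel.lab ℓ :: σ2 → ℓ ∈ M.I →
      ∀ q, M.W M.q0 σ1 q → ∃ q', M.W q [ELabel.lab ℓ] q'}

/-- An LTS is utrace-closed when every trace over `(L^δ)*` that it can
perform is a utrace. -/
def UtraceClosed (M : LTS Q Lab) : Prop :=
  ∀ σ : List (ELabel Lab), TraceIn M.L σ → (∃ q', M.W M.q0 σ q') → σ ∈ M.Utraces

end LTS

/-- `i uioco s`. -/
def Uioco {Qi Qs Lab : Type} (i : LTS Qi Lab) (s : LTS Qs Lab) : Prop :=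
  ∀ σ ∈ s.Utraces, i.outSet (i.after σ) ⊆ s.outSet (s.after σ)

/-- Composability: disjoint output label sets. -/
def Composable {Qs Qe Lab : Type} (s : LTS Qs Lab) (e : LTS Qe Lab) : Prop :=
  s.U ∩ e.U = ∅

/-- Parallel composition `s ∥ e`. -/
def par {Qs Qe Lab : Type} (s : LTS Qs Lab) (e : LTS Qe Lab) : LTS (Qs × Qe) Lab where
  I := (s.I \ e.U) ∪ (e.I \ s.U)
  U := s.U ∪ e.U
  T := fun p a p' =>
    match a with
    | none =>
        (s.T p.1 none p'.1 ∧ p'.2 = p.2) ∨ (e.T p.2 none p'.2 ∧ p'.1 = p.1)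
    | some ℓ =>
        (ℓ ∈ s.L ∧ ℓ ∉ e.L ∧ s.T p.1 (some ℓ) p'.1 ∧ p'.2 = p.2) ∨
        (ℓ ∈ e.L ∧ ℓ ∉ s.L ∧ e.T p.2 (some ℓ) p'.2 ∧ p'.1 = p.1) ∨
        (ℓ ∈ s.L ∧ ℓ ∈ e.L ∧ s.T p.1 (some ℓ) p'.1 ∧ e.T p.2 (some ℓ) p'.2)
  q0 := (s.q0, e.q0)

/-- `s accepts e`: along utraces of `s ∥ e`, every output of `e` that is an
input of `s` is (weakly) enabled in `s`. -/
def Accepts {Qs Qe Lab : Type} (s : LTS Qs Lab) (e : LTS Qe Lab) : Prop :=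
  ∀ σ ∈ (par s e).Utraces, ∀ qs qe, (par s e).W (par s e).q0 σ (qs, qe) →
    ∀ ℓ, ELabel.lab ℓ ∈ e.outq qe → ℓ ∈ s.I → ℓ ∈ s.inq qs

/-- `s mutually accepts e`. -/
def MutuallyAccepts {Qs Qe Lab : Type} (s : LTS Qs Lab) (e : LTS Qe Lab) : Prop :=
  Accepts s e ∧ Accepts e s

/-- `R` is an ecosim for `s` and `e`. -/
def IsEcosim {Qs Qe Lab : Type} (s : LTS Qs Lab) (e : LTS Qe Lab)
    (R : Set (Set Qs × Set Qe)) : Prop :=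
  (s.after [], e.after []) ∈ R ∧
  ∀ Xs Xe, (Xs, Xe) ∈ R →
    (∀ ℓ, ELabel.lab ℓ ∈ e.outSet Xe → ℓ ∈ s.I →
      ℓ ∈ s.inSet Xs ∧
        (s.afterSet Xs [ELabel.lab ℓ], e.afterSet Xe [ELabel.lab ℓ]) ∈ R) ∧
    (∀ ℓ, ELabel.lab ℓ ∈ s.outSet Xs → ℓ ∈ e.I →
      ℓ ∈ e.inSet Xe ∧
        (s.afterSet Xs [ELabel.lab ℓ], e.afterSet Xe [ELabel.lab ℓ]) ∈ R) ∧
    (∀ ℓ, (ELabel.lab ℓ ∈ e.outSet Xe ∨ ℓ ∈ e.inSet Xe) → ℓ ∉ s.L →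
      (Xs, e.afterSet Xe [ELabel.lab ℓ]) ∈ R) ∧
    (∀ ℓ, (ELabel.lab ℓ ∈ s.outSet Xs ∨ ℓ ∈ s.inSet Xs) → ℓ ∉ e.L →
      (s.afterSet Xs [ELabel.lab ℓ], Xe) ∈ R) ∧
    (∀ ℓ, ℓ ∈ s.inSet Xs → ℓ ∈ e.inSet Xe →
      (s.afterSet Xs [ELabel.lab ℓ], e.afterSet Xe [ELabel.lab ℓ]) ∈ R) ∧
    (ELabel.delta ∈ s.outSet Xs → ELabel.delta ∈ e.outSet Xe →
      (s.afterSet Xs [ELabel.delta], e.afterSet Xe [ELabel.delta]) ∈ R)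

/-- `s eco e`: there exists an ecosim for `s` and `e`. -/
def Eco {Qs Qe Lab : Type} (s : LTS Qs Lab) (e : LTS Qe Lab) : Prop :=
  ∃ R, IsEcosim s e R

/-- `R_U(s,e)`: the smallest relation closed under the given rules. -/
inductive RU {Qs Qe Lab : Type} (s : LTS Qs Lab) (e : LTS Qe Lab) :
    Set Qs → Set Qe → Prop
  | base : RU s e (s.after []) (e.after [])
  | syncOutE {Xs : Set Qs} {Xe : Set Qe} (ℓ : Lab) :
      RU s e Xs Xe → ELabel.lab ℓ ∈ e.outSet Xe → ℓ ∈ s.I →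
      RU s e (s.afterSet Xs [ELabel.lab ℓ]) (e.afterSet Xe [ELabel.lab ℓ])
  | syncOutS {Xs : Set Qs} {Xe : Set Qe} (ℓ : Lab) :
      RU s e Xs Xe → ELabel.lab ℓ ∈ s.outSet Xs → ℓ ∈ e.I →
      RU s e (s.afterSet Xs [ELabel.lab ℓ]) (e.afterSet Xe [ELabel.lab ℓ])
  | internalE {Xs : Set Qs} {Xe : Set Qe} (ℓ : Lab) :
      RU s e Xs Xe → (ELabel.lab ℓ ∈ e.outSet Xe ∨ ℓ ∈ e.inSet Xe) → ℓ ∉ s.L →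
      RU s e Xs (e.afterSet Xe [ELabel.lab ℓ])
  | internalS {Xs : Set Qs} {Xe : Set Qe} (ℓ : Lab) :
      RU s e Xs Xe → (ELabel.lab ℓ ∈ s.outSet Xs ∨ ℓ ∈ s.inSet Xs) → ℓ ∉ e.L →
      RU s e (s.afterSet Xs [ELabel.lab ℓ]) Xe
  | syncIn {Xs : Set Qs} {Xe : Set Qe} (ℓ : Lab) :
      RU s e Xs Xe → ℓ ∈ s.inSet Xs → ℓ ∈ e.inSet Xe →
      RU s e (s.afterSet Xs [ELabel.lab ℓ]) (e.afterSet Xe [ELabel.lab ℓ])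
  | qdelta {Xs : Set Qs} {Xe : Set Qe} :
      RU s e Xs Xe → ELabel.delta ∈ s.outSet Xs → ELabel.delta ∈ e.outSet Xe →
      RU s e (s.afterSet Xs [ELabel.delta]) (e.afterSet Xe [ELabel.delta])

open Classical in
/-- Projection `σ↾𝓛^δ` of a trace onto an (extended) label set: keeps `δ`
and the labels in `Ls`, removes all other labels. -/
noncomputable def projD {Lab : Type} (σ : List (ELabel Lab)) (Ls : Set Lab) :
    List (ELabel Lab) :=
  σ.filter fun x => decide (ELabel.inL Ls x)

open Classical in
/-- Projection `σ↾𝓛` of a trace of plain labels onto a label set. -/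
noncomputable def projL {Lab : Type} (σ : List Lab) (Ls : Set Lab) : List Lab :=
  σ.filter fun ℓ => decide (ℓ ∈ Ls)

open Classical in
/-- Substitution `σ[θ/δ]` of the label `θ` by the quiescence label `δ`. -/
noncomputable def substTheta {Lab : Type} (θ : Lab) (σ : List Lab) :
    List (ELabel Lab) :=
  σ.map fun ℓ => if ℓ = θ then ELabel.delta else ELabel.lab ℓ

/-- `⟨X⟩`: componentwise collection of a set of pairs of states. -/
def collect {Qs Qe : Type} (X : Set (Qs × Qe)) : Set Qs × Set Qe :=
  (Prod.fst '' X, Prod.snd '' X)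

/-- `q_s accepts q_e over σ`. -/
def AcceptsOver {Qs Qe Lab : Type} (s : LTS Qs Lab) (e : LTS Qe Lab)
    (qs : Qs) (qe : Qe) (σ : List (ELabel Lab)) : Prop :=
  ∀ σ1 σ2 : List (ELabel Lab), σ1 ++ σ2 = σ →
    ∀ (qs' : Qs) (qe' : Qe), (par s e).W (qs, qe) σ1 (qs', qe') →
      ∀ ℓ, ELabel.lab ℓ ∈ e.outq qe' → ℓ ∈ s.I → ℓ ∈ s.inq qs' ∧ ℓ ∈ e.U

/-- `q_s mutually accepts q_e over σ`. -/
def MutuallyAcceptsOver {Qs Qe Lab : Type} (s : LTS Qs Lab) (e : LTS Qe Lab)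
    (qs : Qs) (qe : Qe) (σ : List (ELabel Lab)) : Prop :=
  AcceptsOver s e qs qe σ ∧ AcceptsOver e s qe qs σ

/-- A test case: a quasi-finite tree-shaped LTS without `τ`-transitions, with
terminal states `pass` and `fail` carrying input self-loops, a special
quiescence-observation input `θ`, at most one output transition per state,
and receptive to all inputs other than `θ`. -/
structure TestCase (Qt Lab : Type) extends LTS Qt Lab where
  passS : Qt
  failS : Qt
  theta : Lab
  theta_input : theta ∈ I
  no_tau : ∀ q q', ¬ T q none q'
  tree : ∀ q, q ≠ q0 → q ≠ passS → q ≠ failS →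
    ∃! p : Qt × Option Lab, T p.1 p.2 q
  pass_loops : ∀ ℓ ∈ I, T passS (some ℓ) passS
  pass_terminal : ∀ a q', T passS a q' → q' = passS ∧ ∃ ℓ ∈ I, a = some ℓ
  fail_loops : ∀ ℓ ∈ I, T failS (some ℓ) failS
  fail_terminal : ∀ a q', T failS a q' → q' = failS ∧ ∃ ℓ ∈ I, a = some ℓ
  one_output : ∀ q ℓ ℓ' q' q'', ℓ ∈ U → ℓ' ∈ U →
    T q (some ℓ) q' → T q (some ℓ') q'' → ℓ = ℓ' ∧ q' = q''
  receptive : ∀ q, ∀ ℓ ∈ I, ℓ ≠ theta → ∃ q', T q (some ℓ) q'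

/-- Test execution `t ⫿ i` of a test case `t` with an implementation `i`. -/
def testExec {Qt Qi Lab : Type} (t : TestCase Qt Lab) (i : LTS Qi Lab) :
    LTS (Qt × Qi) Lab where
  I := ∅
  U := i.U ∪ (t.toLTS.L \ {t.theta})
  T := fun p a p' =>
    match a with
    | none => i.T p.2 none p'.2 ∧ p'.1 = p.1
    | some ℓ =>
        (ℓ ∈ i.L ∧ ℓ ∉ t.toLTS.L ∧ i.T p.2 (some ℓ) p'.2 ∧ p'.1 = p.1) ∨
        (ℓ ∈ t.toLTS.L ∧ ℓ ∉ i.L ∧ ℓ ≠ t.theta ∧ t.T p.1 (some ℓ) p'.1 ∧ p'.2 = p.2) ∨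
        (ℓ ∈ i.L ∧ ℓ ∈ t.toLTS.L ∧ t.T p.1 (some ℓ) p'.1 ∧ i.T p.2 (some ℓ) p'.2) ∨
        (ℓ = t.theta ∧ t.T p.1 (some ℓ) p'.1 ∧ p'.2 = p.2 ∧ i.Quiescent p.2)
  q0 := (t.q0, i.q0)

/-!
After every utrace of `s ∥ e` the set of reachable states is a full product `Xs × Xe` with
`(Xs, Xe)` in the ecosim. Equality, rather than inclusion, is what makes the induction work: the
utrace condition only speaks about reachable pairs, while the ecosim rules for inputs ask that the
input be enabled in *every* state of `Xs` and of `Xe`. A labelled step preserves products since the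
components move independently. For `δ`, the composition might be quiescent only because one
component refuses an output of the other; the ecosim rules for outputs exclude this.
-/

namespace Composable

variable {Qs Qe Lab : Type} {s : LTS Qs Lab} {e : LTS Qe Lab} {ℓ : Lab}

theorem symm (h : Composable s e) : Composable e s :=
  (Set.inter_comm e.U s.U).trans h

theorem notMem_right (h : Composable s e) (hs : ℓ ∈ s.U) : ℓ ∉ e.U :=
  Set.disjoint_left.1 (Set.disjoint_iff_inter_eq_empty.2 h) hs

end Composable

namespace LTS

open ELabel

section Weak

variable {Q Lab : Type} {M : LTS Q Lab} {X : Set Q} {q q' : Q} {σ : List (ELabel Lab)}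
  {x : ELabel Lab} {ℓ : Lab}

theorem w_nil_iff : M.W q [] q' ↔ M.Eps q q' := by
  refine ⟨fun h => ?_, W.nil⟩
  generalize hσ : [] = σ at h
  cases h with
  | nil h => exact h
  | snoc => simp at hσ

theorem w_append_singleton_iff :
    M.W q (σ ++ [x]) q' ↔ ∃ q₁ q₂, M.W q σ q₁ ∧ M.VStep q₁ x q₂ ∧ M.Eps q₂ q' := by
  refine ⟨fun h => ?_, fun ⟨_, _, hσ, hx, hε⟩ => W.snoc hσ hx hε⟩
  generalize hρ : σ ++ [x] = ρ at h
  cases h with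
  | nil => simp at hρ
  | snoc hσ hx hε =>
    obtain ⟨rfl, rfl⟩ : σ = _ ∧ x = _ := by simpa using hρ
    exact ⟨_, _, hσ, hx, hε⟩

theorem w_singleton_iff :
    M.W q [x] q' ↔ ∃ q₁ q₂, M.Eps q q₁ ∧ M.VStep q₁ x q₂ ∧ M.Eps q₂ q' := by
  simpa only [List.nil_append, w_nil_iff] using w_append_singleton_iff (M := M) (σ := [])

theorem W.trans_eps (h : M.W q σ q') {q'' : Q} (hε : M.Eps q' q'') : M.W q σ q'' := by
  cases h with
  | nil h => exact .nil (h.trans hε)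
  | snoc hσ hx h => exact .snoc hσ hx (h.trans hε)

theorem Eps.eq_of_forall_not_tau (h : M.Eps q q') (hq : ∀ q₁, ¬ M.T q none q₁) : q' = q :=
  h.cases_head.elim Eq.symm fun ⟨_, hτ, _⟩ => (hq _ hτ).elim

theorem w_delta_iff : M.W q [delta] q' ↔ M.Eps q q' ∧ M.Quiescent q' := by
  rw [w_singleton_iff]
  constructor
  · rintro ⟨q₁, _, hε, ⟨rfl, hquiet⟩, hε'⟩
    obtain rfl := Eps.eq_of_forall_not_tau hε' hquiet.2
    exact ⟨hε, hquiet⟩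
  · rintro ⟨hε, hquiet⟩
    exact ⟨q', q', hε, ⟨rfl, hquiet⟩, .refl⟩

theorem after_append_singleton : M.after (σ ++ [x]) = M.afterSet (M.after σ) [x] := by
  ext q'
  constructor
  · intro h
    obtain ⟨q₁, q₂, hσ, hx, hε⟩ := w_append_singleton_iff.1 h
    exact ⟨q₁, hσ, w_singleton_iff.2 ⟨q₁, q₂, .refl, hx, hε⟩⟩
  · rintro ⟨q, hσ, h⟩
    obtain ⟨q₁, q₂, hε, hx, hε'⟩ := w_singleton_iff.1 h
    exact .snoc (W.trans_eps hσ hε) hx hε'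

theorem subset_afterSet_nil : X ⊆ M.afterSet X [] :=
  fun q hq => ⟨q, hq, .nil .refl⟩

theorem afterSet_after_nil : M.afterSet (M.after σ) [] = M.after σ :=
  Set.Subset.antisymm (fun _ ⟨_, hσ, hε⟩ => W.trans_eps hσ (w_nil_iff.1 hε)) subset_afterSet_nil

theorem nonempty_of_afterSet (h : (M.afterSet X σ).Nonempty) : X.Nonempty :=
  let ⟨_, q, hq, _⟩ := h
  ⟨q, hq⟩

theorem mem_of_eps (hX : M.afterSet X [] = X) (hq : q ∈ X) (h : M.Eps q q') : q' ∈ X :=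
  hX ▸ ⟨q, hq, .nil h⟩

theorem mem_outSet_of_nonempty_afterSet (hX : M.afterSet X [] = X) (hx : x.inL M.U)
    (h : (M.afterSet X [x]).Nonempty) : x ∈ M.outSet X := by
  obtain ⟨_, q, hq, hW⟩ := h
  obtain ⟨q₁, q₂, hε, hstep, -⟩ := w_singleton_iff.1 hW
  refine Set.mem_biUnion (mem_of_eps hX hq hε) ?_
  cases x with
  | lab ℓ => exact ⟨hx, q₂, hstep⟩
  | delta => exact hstep.2

theorem mem_inSet_iff : ℓ ∈ M.inSet X ↔ ∀ q ∈ X, ℓ ∈ M.inq q :=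
  Set.mem_iInter₂

theorem mem_utraces_of_append_singleton_mem (h : σ ++ [x] ∈ M.Utraces) : σ ∈ M.Utraces := by
  obtain ⟨hL, ⟨q, hq⟩, hin⟩ := h
  obtain ⟨q₁, _, hσ, _⟩ := w_append_singleton_iff.1 hq
  exact ⟨fun y hy => hL y (List.mem_append_left _ hy), ⟨q₁, hσ⟩,
    fun σ₁ ℓ σ₂ hσ => hin σ₁ ℓ (σ₂ ++ [x]) (by simp [hσ])⟩

theorem mem_inSet_after_of_append_singleton_mem_utraces (h : σ ++ [lab ℓ] ∈ M.Utraces)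
    (hℓ : ℓ ∈ M.I) : ℓ ∈ M.inSet (M.after σ) :=
  mem_inSet_iff.2 fun q hq => ⟨hℓ, h.2.2 σ ℓ [] rfl hℓ q hq⟩

end Weak

section Parallel

variable {Qs Qe Lab : Type} {s : LTS Qs Lab} {e : LTS Qe Lab} {Xs : Set Qs} {Xe : Set Qe}
  {p p' : Qs × Qe} {ℓ : Lab}

theorem t_par_sync_iff (hs : ℓ ∈ s.L) (he : ℓ ∈ e.L) :
    (par s e).T p (some ℓ) p' ↔ s.T p.1 (some ℓ) p'.1 ∧ e.T p.2 (some ℓ) p'.2 := by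
  simp [par, hs, he]

theorem t_par_left_iff (hs : ℓ ∈ s.L) (he : ℓ ∉ e.L) :
    (par s e).T p (some ℓ) p' ↔ s.T p.1 (some ℓ) p'.1 ∧ p'.2 = p.2 := by
  simp [par, hs, he]

theorem t_par_right_iff (hs : ℓ ∉ s.L) (he : ℓ ∈ e.L) :
    (par s e).T p (some ℓ) p' ↔ p'.1 = p.1 ∧ e.T p.2 (some ℓ) p'.2 := by
  simp [par, hs, he, and_comm]

theorem l_par_subset : (par s e).L ⊆ s.L ∪ e.L := by
  rintro ℓ ((h | h) | h | h)
  exacts [.inl (.inl h.1), .inr (.inl h.1), .inl (.inr h), .inr (.inr h)]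

theorem eps_par_iff : (par s e).Eps p p' ↔ s.Eps p.1 p'.1 ∧ e.Eps p.2 p'.2 := by
  constructor
  · intro h
    induction h with
    | refl => exact ⟨.refl, .refl⟩
    | tail _ hτ ih =>
      rcases hτ with ⟨hτ, heq⟩ | ⟨hτ, heq⟩
      · exact ⟨ih.1.tail hτ, heq ▸ ih.2⟩
      · exact ⟨heq ▸ ih.1, ih.2.tail hτ⟩
  · rintro ⟨hs, he⟩
    have left : (par s e).Eps p (p'.1, p.2) :=
      hs.lift (fun a => (a, p.2)) fun _ _ hτ => .inl ⟨hτ, rfl⟩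
    have right : (par s e).Eps (p'.1, p.2) p' :=
      he.lift (fun b => (p'.1, b)) fun _ _ hτ => .inr ⟨hτ, rfl⟩
    exact left.trans right

theorem w_par_nil_iff : (par s e).W p [] p' ↔ s.W p.1 [] p'.1 ∧ e.W p.2 [] p'.2 := by
  simp only [w_nil_iff, eps_par_iff]

theorem w_par_sync_iff (hs : ℓ ∈ s.L) (he : ℓ ∈ e.L) :
    (par s e).W p [lab ℓ] p' ↔ s.W p.1 [lab ℓ] p'.1 ∧ e.W p.2 [lab ℓ] p'.2 := by
  simp only [w_singleton_iff, VStep, eps_par_iff, t_par_sync_iff hs he]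
  constructor
  · rintro ⟨p₁, p₂, ⟨hε, hε'⟩, ⟨hℓ, hℓ'⟩, hη, hη'⟩
    exact ⟨⟨p₁.1, p₂.1, hε, hℓ, hη⟩, ⟨p₁.2, p₂.2, hε', hℓ', hη'⟩⟩
  · rintro ⟨⟨a₁, a₂, hε, hℓ, hη⟩, ⟨b₁, b₂, hε', hℓ', hη'⟩⟩
    exact ⟨(a₁, b₁), (a₂, b₂), ⟨hε, hε'⟩, ⟨hℓ, hℓ'⟩, hη, hη'⟩

theorem w_par_left_iff (hs : ℓ ∈ s.L) (he : ℓ ∉ e.L) :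
    (par s e).W p [lab ℓ] p' ↔ s.W p.1 [lab ℓ] p'.1 ∧ e.W p.2 [] p'.2 := by
  simp only [w_singleton_iff, w_nil_iff, VStep, eps_par_iff, t_par_left_iff hs he]
  constructor
  · rintro ⟨p₁, p₂, ⟨hε, hε'⟩, ⟨hℓ, heq⟩, hη, hη'⟩
    exact ⟨⟨p₁.1, p₂.1, hε, hℓ, hη⟩, hε'.trans (heq ▸ hη')⟩
  · rintro ⟨⟨a₁, a₂, hε, hℓ, hη⟩, hε'⟩
    exact ⟨(a₁, p'.2), (a₂, p'.2), ⟨hε, hε'⟩, ⟨hℓ, rfl⟩, hη, .refl⟩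

theorem w_par_right_iff (hs : ℓ ∉ s.L) (he : ℓ ∈ e.L) :
    (par s e).W p [lab ℓ] p' ↔ s.W p.1 [] p'.1 ∧ e.W p.2 [lab ℓ] p'.2 := by
  simp only [w_singleton_iff, w_nil_iff, VStep, eps_par_iff, t_par_right_iff hs he]
  constructor
  · rintro ⟨p₁, p₂, ⟨hε, hε'⟩, ⟨heq, hℓ⟩, hη, hη'⟩
    exact ⟨hε.trans (heq ▸ hη), ⟨p₁.2, p₂.2, hε', hℓ, hη'⟩⟩
  · rintro ⟨hε, ⟨b₁, b₂, hε', hℓ, hη⟩⟩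
    exact ⟨(p'.1, b₁), (p'.1, b₂), ⟨hε, hε'⟩, ⟨rfl, hℓ⟩, .refl, hη⟩

theorem W.fst_of_par (h : (par s e).W p [lab ℓ] p') (hs : ℓ ∈ s.L) : s.W p.1 [lab ℓ] p'.1 := by
  by_cases he : ℓ ∈ e.L
  · exact ((w_par_sync_iff hs he).1 h).1
  · exact ((w_par_left_iff hs he).1 h).1

theorem W.snd_of_par (h : (par s e).W p [lab ℓ] p') (he : ℓ ∈ e.L) : e.W p.2 [lab ℓ] p'.2 := by
  by_cases hs : ℓ ∈ s.L
  · exact ((w_par_sync_iff hs he).1 h).2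
  · exact ((w_par_right_iff hs he).1 h).2

theorem mem_inSet_left_of_par (hXe : Xe.Nonempty) (hs : ℓ ∈ s.I)
    (h : ℓ ∈ (par s e).inSet (Xs ×ˢ Xe)) : ℓ ∈ s.inSet Xs := by
  obtain ⟨b, hb⟩ := hXe
  refine mem_inSet_iff.2 fun a ha => ⟨hs, ?_⟩
  obtain ⟨-, p', hW⟩ := mem_inSet_iff.1 h (a, b) ⟨ha, hb⟩
  exact ⟨p'.1, W.fst_of_par hW (.inl hs)⟩

theorem mem_inSet_right_of_par (hXs : Xs.Nonempty) (he : ℓ ∈ e.I)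
    (h : ℓ ∈ (par s e).inSet (Xs ×ˢ Xe)) : ℓ ∈ e.inSet Xe := by
  obtain ⟨a, ha⟩ := hXs
  refine mem_inSet_iff.2 fun b hb => ⟨he, ?_⟩
  obtain ⟨-, p', hW⟩ := mem_inSet_iff.1 h (a, b) ⟨ha, hb⟩
  exact ⟨p'.2, W.snd_of_par hW (.inl he)⟩

theorem afterSet_par_prod {ρ σ τ : List (ELabel Lab)}
    (h : ∀ p ∈ Xs ×ˢ Xe, ∀ p', (par s e).W p ρ p' ↔ s.W p.1 σ p'.1 ∧ e.W p.2 τ p'.2) :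
    (par s e).afterSet (Xs ×ˢ Xe) ρ = s.afterSet Xs σ ×ˢ e.afterSet Xe τ := by
  ext p'
  constructor
  · rintro ⟨p, hp, hW⟩
    obtain ⟨hs, he⟩ := (h p hp p').1 hW
    exact ⟨⟨p.1, hp.1, hs⟩, ⟨p.2, hp.2, he⟩⟩
  · rintro ⟨⟨a, ha, hs⟩, ⟨b, hb, he⟩⟩
    exact ⟨(a, b), ⟨ha, hb⟩, (h (a, b) ⟨ha, hb⟩ p').2 ⟨hs, he⟩⟩

theorem after_par_nil : (par s e).after [] = s.after [] ×ˢ e.after [] :=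
  Set.ext fun _ => w_par_nil_iff

theorem afterSet_nil_of_afterSet_par_prod_nil (hne : (Xs ×ˢ Xe).Nonempty)
    (h : (par s e).afterSet (Xs ×ˢ Xe) [] = Xs ×ˢ Xe) :
    s.afterSet Xs [] = Xs ∧ e.afterSet Xe [] = Xe := by
  rw [afterSet_par_prod fun _ _ _ => w_par_nil_iff] at h
  exact (Set.prod_eq_prod_iff_of_nonempty (h ▸ hne)).1 h

theorem quiescent_par (hs : s.Quiescent p.1) (he : e.Quiescent p.2) :
    (par s e).Quiescent p := by
  constructor
  · rintro ℓ (hU | hU) p' (⟨-, hL, hT, -⟩ | ⟨-, hL, hT, -⟩ | ⟨-, -, hT, hT'⟩)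
    exacts [hs.1 ℓ hU _ hT, hL (.inr hU), hs.1 ℓ hU _ hT, hL (.inr hU), he.1 ℓ hU _ hT,
      he.1 ℓ hU _ hT']
  · rintro p' (⟨hτ, -⟩ | ⟨hτ, -⟩)
    exacts [hs.2 _ hτ, he.2 _ hτ]

theorem t_par_swap_iff {a : Option Lab} :
    (par e s).T p.swap a p'.swap ↔ (par s e).T p a p' := by
  cases a <;> simp only [par, Prod.fst_swap, Prod.snd_swap] <;> tauto

theorem Quiescent.swap_par (h : (par s e).Quiescent p) : (par e s).Quiescent p.swap :=
  ⟨fun x hx p' hT => h.1 x hx.symm p'.swap (t_par_swap_iff.1 hT),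
    fun p' hτ => h.2 p'.swap (t_par_swap_iff.1 hτ)⟩

theorem Quiescent.fst_of_par (hcomp : Composable s e)
    (hacc : ∀ ℓ, lab ℓ ∈ s.outq p.1 → ℓ ∈ e.I → ℓ ∈ e.inq p.2)
    (h : (par s e).Quiescent p) : s.Quiescent p.1 := by
  have no_tau_snd (b : Qe) : ¬ e.T p.2 none b := fun hτ => h.2 (p.1, b) (.inr ⟨hτ, rfl⟩)
  refine ⟨fun ℓ hU a hT => ?_, fun a hτ => h.2 (a, p.2) (.inl ⟨hτ, rfl⟩)⟩
  by_cases heI : ℓ ∈ e.I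
  · obtain ⟨-, _, hW⟩ := hacc ℓ ⟨hU, a, hT⟩ heI
    obtain ⟨_, b, hε, hT', -⟩ := w_singleton_iff.1 hW
    obtain rfl := Eps.eq_of_forall_not_tau hε no_tau_snd
    exact h.1 ℓ (.inl hU) (a, b) ((t_par_sync_iff (.inr hU) (.inl heI)).2 ⟨hT, hT'⟩)
  · have heL : ℓ ∉ e.L := fun hL => hL.elim heI (hcomp.notMem_right hU)
    exact h.1 ℓ (.inl hU) (a, p.2) ((t_par_left_iff (.inr hU) heL).2 ⟨hT, rfl⟩)

theorem Quiescent.snd_of_par (hcomp : Composable s e)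
    (hacc : ∀ ℓ, lab ℓ ∈ e.outq p.2 → ℓ ∈ s.I → ℓ ∈ s.inq p.1)
    (h : (par s e).Quiescent p) : e.Quiescent p.2 :=
  Quiescent.fst_of_par (p := p.swap) hcomp.symm hacc h.swap_par

theorem quiescent_par_iff (hcomp : Composable s e)
    (hse : ∀ ℓ, lab ℓ ∈ s.outq p.1 → ℓ ∈ e.I → ℓ ∈ e.inq p.2)
    (hes : ∀ ℓ, lab ℓ ∈ e.outq p.2 → ℓ ∈ s.I → ℓ ∈ s.inq p.1) :
    (par s e).Quiescent p ↔ s.Quiescent p.1 ∧ e.Quiescent p.2 :=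
  ⟨fun h => ⟨h.fst_of_par hcomp hse, h.snd_of_par hcomp hes⟩, fun h => quiescent_par h.1 h.2⟩

end Parallel

end LTS

namespace IsEcosim

open ELabel LTS

variable {Qs Qe Lab : Type} {s : LTS Qs Lab} {e : LTS Qe Lab} {R : Set (Set Qs × Set Qe)}
  {Xs : Set Qs} {Xe : Set Qe} {qs : Qs} {qe : Qe} {ℓ : Lab}

theorem mem_inq_left_of_mem_outq (hR : IsEcosim s e R) (hX : (Xs, Xe) ∈ R) (hqs : qs ∈ Xs)
    (hqe : qe ∈ Xe) (hout : lab ℓ ∈ e.outq qe) (hs : ℓ ∈ s.I) : ℓ ∈ s.inq qs := by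
  obtain ⟨outputE, -⟩ := hR.2 Xs Xe hX
  exact mem_inSet_iff.1 (outputE ℓ (Set.mem_biUnion hqe hout) hs).1 qs hqs

theorem mem_inq_right_of_mem_outq (hR : IsEcosim s e R) (hX : (Xs, Xe) ∈ R) (hqs : qs ∈ Xs)
    (hqe : qe ∈ Xe) (hout : lab ℓ ∈ s.outq qs) (he : ℓ ∈ e.I) : ℓ ∈ e.inq qe := by
  obtain ⟨-, outputS, -⟩ := hR.2 Xs Xe hX
  exact mem_inSet_iff.1 (outputS ℓ (Set.mem_biUnion hqs hout) he).1 qe hqe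

theorem afterSet_par_delta_eq_prod (hR : IsEcosim s e R) (hcomp : Composable s e)
    (hX : (Xs, Xe) ∈ R) (hXs : s.afterSet Xs [] = Xs) (hXe : e.afterSet Xe [] = Xe) :
    (par s e).afterSet (Xs ×ˢ Xe) [delta] = s.afterSet Xs [delta] ×ˢ e.afterSet Xe [delta] := by
  refine afterSet_par_prod fun p hp p' => ?_
  have quiescent_iff (hε : s.Eps p.1 p'.1 ∧ e.Eps p.2 p'.2) :
      (par s e).Quiescent p' ↔ s.Quiescent p'.1 ∧ e.Quiescent p'.2 := by
    have hmem_s := mem_of_eps hXs hp.1 hε.1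
    have hmem_e := mem_of_eps hXe hp.2 hε.2
    exact quiescent_par_iff hcomp (fun _ => hR.mem_inq_right_of_mem_outq hX hmem_s hmem_e)
      fun _ => hR.mem_inq_left_of_mem_outq hX hmem_s hmem_e
  rw [w_delta_iff, w_delta_iff, w_delta_iff, eps_par_iff, and_and_and_comm,
    and_congr_right quiescent_iff]

theorem afterSet_sync_mem (hR : IsEcosim s e R) (hcomp : Composable s e) (hX : (Xs, Xe) ∈ R)
    (hXs : s.afterSet Xs [] = Xs) (hXe : e.afterSet Xe [] = Xe) (hs : ℓ ∈ s.L) (he : ℓ ∈ e.L)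
    (hYs : (s.afterSet Xs [lab ℓ]).Nonempty) (hYe : (e.afterSet Xe [lab ℓ]).Nonempty)
    (hin : ℓ ∈ (par s e).I → ℓ ∈ (par s e).inSet (Xs ×ˢ Xe)) :
    (s.afterSet Xs [lab ℓ], e.afterSet Xe [lab ℓ]) ∈ R := by
  obtain ⟨outputE, outputS, -, -, inputBoth, -⟩ := hR.2 Xs Xe hX
  by_cases hsU : ℓ ∈ s.U
  · have heI : ℓ ∈ e.I := he.resolve_right (hcomp.notMem_right hsU)
    exact (outputS ℓ (mem_outSet_of_nonempty_afterSet hXs hsU hYs) heI).2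
  have hsI : ℓ ∈ s.I := hs.resolve_right hsU
  by_cases heU : ℓ ∈ e.U
  · exact (outputE ℓ (mem_outSet_of_nonempty_afterSet hXe heU hYe) hsI).2
  have heI : ℓ ∈ e.I := he.resolve_right heU
  have hin' := hin (.inl ⟨hsI, heU⟩)
  exact inputBoth ℓ (mem_inSet_left_of_par (nonempty_of_afterSet hYe) hsI hin')
    (mem_inSet_right_of_par (nonempty_of_afterSet hYs) heI hin')

theorem afterSet_left_mem (hR : IsEcosim s e R) (hX : (Xs, Xe) ∈ R)
    (hXs : s.afterSet Xs [] = Xs) (hs : ℓ ∈ s.L) (he : ℓ ∉ e.L)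
    (hYs : (s.afterSet Xs [lab ℓ]).Nonempty) (hne : Xe.Nonempty)
    (hin : ℓ ∈ (par s e).I → ℓ ∈ (par s e).inSet (Xs ×ˢ Xe)) :
    (s.afterSet Xs [lab ℓ], Xe) ∈ R := by
  obtain ⟨-, -, -, soloS, -⟩ := hR.2 Xs Xe hX
  refine soloS ℓ ?_ he
  by_cases hsU : ℓ ∈ s.U
  · exact .inl (mem_outSet_of_nonempty_afterSet hXs hsU hYs)
  · have hsI : ℓ ∈ s.I := hs.resolve_right hsU
    exact .inr (mem_inSet_left_of_par hne hsI (hin (.inl ⟨hsI, fun h => he (.inr h)⟩)))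

theorem afterSet_right_mem (hR : IsEcosim s e R) (hX : (Xs, Xe) ∈ R)
    (hXe : e.afterSet Xe [] = Xe) (hs : ℓ ∉ s.L) (he : ℓ ∈ e.L)
    (hYe : (e.afterSet Xe [lab ℓ]).Nonempty) (hne : Xs.Nonempty)
    (hin : ℓ ∈ (par s e).I → ℓ ∈ (par s e).inSet (Xs ×ˢ Xe)) :
    (Xs, e.afterSet Xe [lab ℓ]) ∈ R := by
  obtain ⟨-, -, soloE, -⟩ := hR.2 Xs Xe hX
  refine soloE ℓ ?_ hs
  by_cases heU : ℓ ∈ e.U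
  · exact .inl (mem_outSet_of_nonempty_afterSet hXe heU hYe)
  · have heI : ℓ ∈ e.I := he.resolve_right heU
    exact .inr (mem_inSet_right_of_par hne heI (hin (.inr ⟨heI, fun h => hs (.inr h)⟩)))

theorem exists_afterSet_par_lab_eq_prod (hR : IsEcosim s e R) (hcomp : Composable s e)
    (hX : (Xs, Xe) ∈ R) (hXs : s.afterSet Xs [] = Xs) (hXe : e.afterSet Xe [] = Xe)
    (hL : ℓ ∈ s.L ∪ e.L) (hne : ((par s e).afterSet (Xs ×ˢ Xe) [lab ℓ]).Nonempty)
    (hin : ℓ ∈ (par s e).I → ℓ ∈ (par s e).inSet (Xs ×ˢ Xe)) :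
    ∃ Ys Ye, (Ys, Ye) ∈ R ∧ (par s e).afterSet (Xs ×ˢ Xe) [lab ℓ] = Ys ×ˢ Ye := by
  by_cases hs : ℓ ∈ s.L
  · by_cases he : ℓ ∈ e.L
    · have hprod := afterSet_par_prod (Xs := Xs) (Xe := Xe) fun _ _ _ => w_par_sync_iff hs he
      obtain ⟨hYs, hYe⟩ := Set.prod_nonempty_iff.1 (hprod ▸ hne)
      exact ⟨_, _, hR.afterSet_sync_mem hcomp hX hXs hXe hs he hYs hYe hin, hprod⟩
    · have hprod := afterSet_par_prod (Xs := Xs) (Xe := Xe) fun _ _ _ => w_par_left_iff hs he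
      rw [hXe] at hprod
      obtain ⟨hYs, hYe⟩ := Set.prod_nonempty_iff.1 (hprod ▸ hne)
      exact ⟨_, _, hR.afterSet_left_mem hX hXs hs he hYs hYe hin, hprod⟩
  · have he : ℓ ∈ e.L := hL.resolve_left hs
    have hprod := afterSet_par_prod (Xs := Xs) (Xe := Xe) fun _ _ _ => w_par_right_iff hs he
    rw [hXs] at hprod
    obtain ⟨hYs, hYe⟩ := Set.prod_nonempty_iff.1 (hprod ▸ hne)
    exact ⟨_, _, hR.afterSet_right_mem hX hXe hs he hYe hYs hin, hprod⟩

theorem exists_afterSet_par_delta_eq_prod (hR : IsEcosim s e R) (hcomp : Composable s e)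
    (hX : (Xs, Xe) ∈ R) (hXs : s.afterSet Xs [] = Xs) (hXe : e.afterSet Xe [] = Xe)
    (hne : ((par s e).afterSet (Xs ×ˢ Xe) [delta]).Nonempty) :
    ∃ Ys Ye, (Ys, Ye) ∈ R ∧ (par s e).afterSet (Xs ×ˢ Xe) [delta] = Ys ×ˢ Ye := by
  have hprod := hR.afterSet_par_delta_eq_prod hcomp hX hXs hXe
  obtain ⟨hYs, hYe⟩ := Set.prod_nonempty_iff.1 (hprod ▸ hne)
  obtain ⟨-, -, -, -, -, quiescence⟩ := hR.2 Xs Xe hX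
  exact ⟨_, _, quiescence (mem_outSet_of_nonempty_afterSet hXs trivial hYs)
    (mem_outSet_of_nonempty_afterSet hXe trivial hYe), hprod⟩

theorem exists_after_par_eq_prod (hR : IsEcosim s e R) (hcomp : Composable s e)
    {σ : List (ELabel Lab)} (hσ : σ ∈ (par s e).Utraces) :
    ∃ Xs Xe, (Xs, Xe) ∈ R ∧ (par s e).after σ = Xs ×ˢ Xe := by
  induction σ using List.reverseRecOn with
  | nil => exact ⟨_, _, hR.1, after_par_nil⟩
  | append_singleton σ x ih =>
    have hσ' := mem_utraces_of_append_singleton_mem hσ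
    obtain ⟨Xs, Xe, hX, hafter⟩ := ih hσ'
    have hne : (Xs ×ˢ Xe).Nonempty := hafter ▸ hσ'.2.1
    obtain ⟨hXs, hXe⟩ := afterSet_nil_of_afterSet_par_prod_nil hne (hafter ▸ afterSet_after_nil)
    have hnext : (par s e).after (σ ++ [x]) = (par s e).afterSet (Xs ×ˢ Xe) [x] :=
      hafter ▸ after_append_singleton
    have hne' : ((par s e).afterSet (Xs ×ˢ Xe) [x]).Nonempty := hnext ▸ hσ.2.1
    rw [hnext]
    cases x with
    | lab ℓ =>
      have hL : ℓ ∈ s.L ∪ e.L := l_par_subset (hσ.1 (lab ℓ) (by simp))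
      exact hR.exists_afterSet_par_lab_eq_prod hcomp hX hXs hXe hL hne'
        fun hI => hafter ▸ mem_inSet_after_of_append_singleton_mem_utraces hσ hI
    | delta => exact hR.exists_afterSet_par_delta_eq_prod hcomp hX hXs hXe hne'

end IsEcosim

theorem eco_implies_accepts_general {Qs Qe Lab : Type} {s : LTS Qs Lab} {e : LTS Qe Lab}
    (hcomp : Composable s e) (heco : Eco s e) : Accepts s e := by
  obtain ⟨R, hR⟩ := heco
  intro σ hσ qs qe hW ℓ hout hI
  obtain ⟨Xs, Xe, hX, hafter⟩ := hR.exists_after_par_eq_prod hcomp hσ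
  obtain ⟨hqs, hqe⟩ : (qs, qe) ∈ Xs ×ˢ Xe := hafter ▸ hW
  exact hR.mem_inq_left_of_mem_outq hX hqs hqe hout hI

/-- for composable `s`, `e`, `s eco e` implies `s accepts e`. -/
theorem eco_implies_accepts {Qs Qe Lab : Type} (s : LTS Qs Lab) (e : LTS Qe Lab)
    (hs : s.WellFormed) (he : e.WellFormed)
    (hcomp : Composable s e) (heco : Eco s e) :
    Accepts s e := by
  exact eco_implies_accepts_general hcomp heco
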